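/- With the notation of the context, for every λ ∈ SL₂(ℤ) and every τ ∈ ℍ one has the transformation formulas G_{0,λσ}(τ) = G_{2,λ}(σ·τ), G_{1,λσ}(τ) = −G_{1,λ}(σ·τ) − 2·G_{2,λ}(σ·τ), G_{2,λσ}(τ) = G_{0,λ}(σ·τ) + 4·G_{1,λ}(σ·τ) + 4·G_{2,λ}(σ·τ), and consequently the pointwise identity G_{0,λσ}(τ)·f_{2,λσ}(τ) − 2·G_{1,λσ}(τ)·f_{1,λσ}(τ) + G_{2,λσ}(τ)·f_{0,λσ}(τ) = ( G_{0,λ}(σ·τ)·f_{2,λ}(σ·τ) − 2·G_{1,λ}(σ·τ)·f_{1,λ}(σ·τ) + G_{2,λ}(σ·τ)·f_{0,λ}(σ·τ) )·(τ+2)^{−2}. -/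

import Mathlib

open scoped BigOperators MatrixGroups
open UpperHalfPlane

namespace MW

/-- Möbius action of an integral matrix on `ℂ` (junk where the denominator vanishes). -/
noncomputable def mob (γ : SL(2, ℤ)) (z : ℂ) : ℂ :=
  (((γ : Matrix (Fin 2) (Fin 2) ℤ) 0 0 : ℂ) * z + ((γ : Matrix (Fin 2) (Fin 2) ℤ) 0 1 : ℂ)) /
    (((γ : Matrix (Fin 2) (Fin 2) ℤ) 1 0 : ℂ) * z + ((γ : Matrix (Fin 2) (Fin 2) ℤ) 1 1 : ℂ))

/-- Extension by zero of a function on `ℍ` to `ℂ`. -/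
noncomputable def extH (f : ℍ → ℂ) : ℂ → ℂ :=
  fun z => if h : 0 < z.im then f ⟨z, h⟩ else 0

/-- The straight path from `−1` to `τ`, evaluated at `x ∈ [0,1]`. -/
noncomputable def pathPt (τ : ℍ) (x : ℝ) : ℂ := -1 + (x : ℂ) * ((τ : ℂ) + 1)

/-- `f_{i,λ}(τ) = f(λ·τ)·(cτ+d)^{−4}·τ^i`. -/
noncomputable def fia (f : ℍ → ℂ) (γ : SL(2, ℤ)) (i : ℕ) (τ : ℍ) : ℂ :=
  f (γ • τ) *
      (((γ : Matrix (Fin 2) (Fin 2) ℤ) 1 0 : ℂ) * (τ : ℂ) +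
        ((γ : Matrix (Fin 2) (Fin 2) ℤ) 1 1 : ℂ)) ^ (-4 : ℤ) *
    (τ : ℂ) ^ i

/-- `G_{i,λ}(τ) = conj( ∫_{−1}^{τ} g(λ·s)·(cs+d)^{−4}·s^i ds )`, the (path-independent)
integral computed along the straight segment from `−1` to `τ`. -/
noncomputable def G (g : ℍ → ℂ) (γ : SL(2, ℤ)) (i : ℕ) (τ : ℍ) : ℂ :=
  (starRingEnd ℂ)
    (∫ x in (0 : ℝ)..1,
      extH g (mob γ (pathPt τ x)) *
          (((γ : Matrix (Fin 2) (Fin 2) ℤ) 1 0 : ℂ) * pathPt τ x +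
            ((γ : Matrix (Fin 2) (Fin 2) ℤ) 1 1 : ℂ)) ^ (-4 : ℤ) *
        (pathPt τ x) ^ i * ((τ : ℂ) + 1))

/-- The matrix `σ = (0 −1; 1 2)`, so that `σ·τ = −1/(τ+2)`. -/
noncomputable def sig : SL(2, ℤ) :=
  ⟨!![0, -1; 1, 2], by norm_num [Matrix.det_fin_two_of]⟩

end MW

/-!
The matrix `σ` is parabolic and fixes the cusp `-1`. Multiplying `λ` by `σ` on the right turns the
`f_{i,λσ}` into weight-2 slashes by `σ` of integral combinations of the `f_{j,λ}`, since
`τ` equals `-2 - 1 / (σ • τ)`. A weight-2 slash is the pullback of the differential `φ dτ`, so the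
formulas for the `G_{i,λσ}` follow once the integral from `-1` is known to be compatible with this
pullback. The integral is therefore characterised as the primitive vanishing nontangentially at
`-1`, a notion that Möbius maps preserve; cuspidal decay makes the primitive exist and makes the
integral along the segment compute it. Finally, both triples `(f_i)` and `(G_i)` transform under the
same symmetric square of `σ`, which preserves the polarised discriminant `G₀ f₂ - 2 G₁ f₁ + G₂ f₀`.
-/

namespace MW

open Filter MeasureTheory ModularForm Set Topology
open scoped Manifold NNReal Pointwise

section NontangentialLimits

/-- The Stolz angle of aperture `δ` at the boundary point `p`: the cone of points whose height is
at least `δ` times their distance to `p`. Larger `δ` gives a smaller cone. -/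
def stolzAngle (p δ : ℝ) : Set ℂ := {z | δ * ‖z - p‖ ≤ z.im}

/-- The filter on `ℍ` of approach to the real point `p` inside the Stolz angle of aperture `δ`; it
is trivial for `δ > 1`. -/
noncomputable def nontangentialWithin (p δ : ℝ) : Filter ℍ :=
  comap (↑) (𝓝[stolzAngle p δ] (p : ℂ))

/-- The filter of nontangential approach to the real point `p`: a limit along it is a limit inside
each Stolz angle, with no uniformity in the aperture. -/
noncomputable def nontangential (p : ℝ) : Filter ℍ := ⨆ δ > 0, nontangentialWithin p δ

variable {α : Type*} {p δ : ℝ}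

lemma stolzAngle_antitone (p : ℝ) : Antitone (stolzAngle p) := fun _ _ h _ hz =>
  (mul_le_mul_of_nonneg_right h (norm_nonneg _)).trans hz

lemma convex_stolzAngle (hδ : 0 ≤ δ) : Convex ℝ (stolzAngle p δ) := by
  have hconv : ConvexOn ℝ univ fun z : ℂ => δ • dist z p - Complex.imLm z :=
    ((convexOn_dist _ convex_univ).smul hδ).sub (Complex.imLm.concaveOn convex_univ)
  simpa [stolzAngle, dist_eq_norm] using hconv.convex_le 0

lemma exists_mem_stolzAngle (p : ℝ) (τ : ℍ) : ∃ δ > 0, (τ : ℂ) ∈ stolzAngle p δ := by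
  have hne : (τ : ℂ) - p ≠ 0 := sub_ne_zero.2 (τ.ne_ofReal p)
  exact ⟨τ.im / ‖(τ : ℂ) - p‖, div_pos τ.im_pos (norm_pos_iff.2 hne),
    (div_mul_cancel₀ _ (norm_ne_zero_iff.2 hne)).le⟩

lemma tendsto_nontangential_iff {l : Filter α} {f : ℍ → α} :
    Tendsto f (nontangential p) l ↔
      ∀ δ > 0, Tendsto f (nontangentialWithin p δ) l := by
  simp only [nontangential, tendsto_iSup]

lemma nontangentialWithin_le (p : ℝ) (hδ : 0 < δ) :
    nontangentialWithin p δ ≤ nontangential p :=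
  le_iSup₂ (f := fun δ (_ : δ > 0) => nontangentialWithin p δ) δ hδ

lemma eventually_mem_stolzAngle (p δ : ℝ) :
    ∀ᶠ τ : ℍ in nontangentialWithin p δ, (τ : ℂ) ∈ stolzAngle p δ :=
  tendsto_comap.eventually self_mem_nhdsWithin

lemma tendsto_nontangential_of_mem {l : Filter α} {f : α → ℍ} (hδ : 0 < δ)
    (hf : Tendsto (fun a => (f a : ℂ)) l (𝓝 p)) (hmem : ∀ᶠ a in l, (f a : ℂ) ∈ stolzAngle p δ) :
    Tendsto f l (nontangential p) := by
  have hwithin : Tendsto f l (nontangentialWithin p δ) :=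
    tendsto_comap_iff.2 (tendsto_nhdsWithin_iff.2 ⟨hf, hmem⟩)
  exact hwithin.mono_right (nontangentialWithin_le p hδ)

lemma tendsto_coe_nontangential (p : ℝ) : Tendsto (↑) (nontangential p) (𝓝 (p : ℂ)) :=
  tendsto_nontangential_iff.2 fun _ _ => tendsto_comap.mono_right nhdsWithin_le_nhds

lemma tendsto_num_nontangential (γ : GL (Fin 2) ℝ) :
    Tendsto (fun τ : ℍ => num γ τ) (nontangential p) (𝓝 (num γ p)) :=
  ((tendsto_coe_nontangential p).const_mul _).add_const _

lemma tendsto_denom_nontangential (γ : GL (Fin 2) ℝ) :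
    Tendsto (fun τ : ℍ => denom γ τ) (nontangential p) (𝓝 (denom γ p)) :=
  ((tendsto_coe_nontangential p).const_mul _).add_const _

lemma im_segment (p : ℝ) (τ : ℍ) (x : ℝ) : ((p : ℂ) + x * (τ - p)).im = x * τ.im := by
  simp

lemma coe_ofComplex_segment (p : ℝ) (τ : ℍ) {x : ℝ} (hx : 0 < x) :
    (ofComplex ((p : ℂ) + x * (τ - p)) : ℂ) = p + x * (τ - p) := by
  rw [ofComplex_apply_of_im_pos (by rw [im_segment]; exact mul_pos hx τ.im_pos)]

lemma segment_mem_stolzAngle {τ : ℍ} (hτ : (τ : ℂ) ∈ stolzAngle p δ) {x : ℝ} (hx : 0 ≤ x) :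
    (p : ℂ) + x * (τ - p) ∈ stolzAngle p δ := by
  have hmul := mul_le_mul_of_nonneg_left hτ hx
  simp only [stolzAngle, mem_ofPred_eq, im_segment, add_sub_cancel_left, norm_mul,
    Complex.norm_real, Real.norm_of_nonneg hx]
  calc δ * (x * ‖(τ : ℂ) - p‖) = x * (δ * ‖(τ : ℂ) - p‖) := by ring
    _ ≤ x * τ.im := hmul

lemma tendsto_ofComplex_segment {τ : ℍ} (hτ : (τ : ℂ) ∈ stolzAngle p δ) :
    Tendsto (fun x : ℝ => ofComplex ((p : ℂ) + x * (τ - p))) (𝓝[>] 0)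
      (nontangentialWithin p δ) := by
  have hcont : Continuous fun x : ℝ => (p : ℂ) + x * (τ - p) := by fun_prop
  have hlim : Tendsto (fun x : ℝ => (p : ℂ) + x * (τ - p)) (𝓝[>] 0) (𝓝[stolzAngle p δ] (p : ℂ)) :=
    tendsto_nhdsWithin_iff.2 ⟨(hcont.tendsto' 0 p (by simp)).mono_left nhdsWithin_le_nhds,
      eventually_mem_nhdsWithin.mono fun x hx => segment_mem_stolzAngle hτ (le_of_lt hx)⟩
  refine tendsto_comap_iff.2 (hlim.congr' ?_)
  filter_upwards [self_mem_nhdsWithin] with x hx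
  exact (coe_ofComplex_segment p τ hx).symm

lemma nontangentialWithin_antitone (p : ℝ) : Antitone (nontangentialWithin p) :=
  fun _ _ h => comap_mono (nhdsWithin_mono _ (stolzAngle_antitone p h))

lemma neBot_nontangentialWithin (hδ : δ ≤ 1) : (nontangentialWithin p δ).NeBot := by
  have hmem : ((p +ᵥ I : ℍ) : ℂ) ∈ stolzAngle p 1 := by simp [stolzAngle]
  exact (tendsto_ofComplex_segment hmem).neBot.mono (nontangentialWithin_antitone p hδ)

end NontangentialLimits

section Calculus

lemma intervalIntegrable_of_tendsto {E : Type*} [NormedAddCommGroup E] {u : ℝ → E} {a b : ℝ}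
    {ya yb : E} (hab : a < b) (hu : ContinuousOn u (Ioo a b)) (ha : Tendsto u (𝓝[>] a) (𝓝 ya))
    (hb : Tendsto u (𝓝[<] b) (𝓝 yb)) : IntervalIntegrable u volume a b := by
  refine ((continuousOn_Icc_extendFrom_Ioo hu ha hb).intervalIntegrable_of_Icc
    hab.le).congr_uIoo fun x hx => ?_
  rw [uIoo_of_lt hab] at hx
  exact extendFrom_extends hu x hx

lemma exists_tendsto_of_nnnorm_hasDerivWithinAt_le {𝕜 E : Type*} [RCLike 𝕜]
    [NormedAddCommGroup E] [NormedSpace 𝕜 E] [CompleteSpace E] {s : Set 𝕜} (hs : Convex ℝ s)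
    {f f' : 𝕜 → E} {C : ℝ≥0} (hf : ∀ z ∈ s, HasDerivWithinAt f (f' z) s z)
    (hC : ∀ z ∈ s, ‖f' z‖₊ ≤ C) {F : Filter 𝕜} (hF : Cauchy F) (hsF : s ∈ F) :
    ∃ L, Tendsto f F (𝓝 L) := by
  have hlip : LipschitzOnWith C f s := hs.lipschitzOnWith_of_nnnorm_hasDerivWithin_le hf hC
  exact CompleteSpace.complete (hF.map_of_le hlip.uniformContinuousOn (le_principal_iff.2 hsF))

end Calculus

section Primitives

variable {p δ : ℝ} {φ ψ : ℍ → ℂ} {P Q : ℍ → ℂ} {c : ℂ}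

/-- `P` is the integral of `φ dτ` from the real point `p`: a primitive of `φ` on `ℍ` that tends to
`0` nontangentially at `p`. Composition with `ofComplex` lets `P` be differentiated as a function
on `ℂ`. -/
structure IsPrimitiveFrom (p : ℝ) (φ P : ℍ → ℂ) : Prop where
  hasDerivAt (τ : ℍ) : HasDerivAt (P ∘ ofComplex) (φ τ) τ
  tendsto_zero : Tendsto P (nontangential p) (𝓝 0)

lemma IsPrimitiveFrom.add (hP : IsPrimitiveFrom p φ P) (hQ : IsPrimitiveFrom p ψ Q) :
    IsPrimitiveFrom p (φ + ψ) (P + Q) where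
  hasDerivAt τ := (hP.hasDerivAt τ).add (hQ.hasDerivAt τ)
  tendsto_zero := add_zero (0 : ℂ) ▸ hP.tendsto_zero.add hQ.tendsto_zero

lemma IsPrimitiveFrom.const_smul (a : ℂ) (hP : IsPrimitiveFrom p φ P) :
    IsPrimitiveFrom p (a • φ) (a • P) where
  hasDerivAt τ := (hP.hasDerivAt τ).const_mul a
  tendsto_zero := mul_zero a ▸ hP.tendsto_zero.const_mul a

lemma exists_hasDerivAt_of_mdifferentiable (hφ : MDiff φ) :
    ∃ P : ℍ → ℂ, ∀ τ : ℍ, HasDerivAt (P ∘ ofComplex) (φ τ) τ := by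
  have hopen : IsOpen {z : ℂ | 0 < z.im} := isOpen_upperHalfPlaneSet
  obtain ⟨P, hP⟩ := (convex_halfSpace_im_gt 0).exists_forall_hasDerivWithinAt
    (mdifferentiable_iff.1 hφ)
  refine ⟨fun τ => P τ, fun τ => HasDerivAt.congr_of_eventuallyEq (f := P) ?_ ?_⟩
  · simpa using (hP τ τ.im_pos).hasDerivAt (hopen.mem_nhds τ.im_pos)
  · exact (eventuallyEq_coe_comp_ofComplex τ.im_pos).fun_comp P

lemma exists_tendsto_nontangentialWithin (hP : ∀ τ : ℍ, HasDerivAt (P ∘ ofComplex) (φ τ) τ)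
    (hδ : 0 ≤ δ) (hδ' : δ ≤ 1) (hφ : Tendsto φ (nontangentialWithin p δ) (𝓝 c)) :
    ∃ L, Tendsto P (nontangentialWithin p δ) (𝓝 L) := by
  have := neBot_nontangentialWithin (p := p) hδ'
  have hcauchy : Cauchy (map (↑) (nontangentialWithin p δ) : Filter ℂ) :=
    (cauchy_nhds (a := (p : ℂ))).mono (map_comap_le.trans nhdsWithin_le_nhds)
  have hbound : ∀ᶠ τ in nontangentialWithin p δ, ‖φ τ‖₊ ≤ ‖c‖₊ + 1 :=
    (hφ.nnnorm.eventually_lt_const (lt_add_one _)).mono fun _ => le_of_lt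
  obtain ⟨r, hr, hball⟩ := Metric.mem_nhdsWithin_iff.1 (eventually_comap.1 hbound)
  have hconv : Convex ℝ (Metric.ball (p : ℂ) r ∩ stolzAngle p δ ∩ {z | 0 < z.im}) :=
    ((convex_ball _ _).inter (convex_stolzAngle hδ)).inter (convex_halfSpace_im_gt 0)
  have hmem : Metric.ball (p : ℂ) r ∩ stolzAngle p δ ∩ {z | 0 < z.im} ∈
      map (↑) (nontangentialWithin p δ) :=
    mem_comap.2 ⟨_, inter_mem (mem_nhdsWithin_of_mem_nhds (Metric.ball_mem_nhds _ hr))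
      self_mem_nhdsWithin, fun τ hτ => ⟨hτ, τ.im_pos⟩⟩
  obtain ⟨L, hL⟩ := exists_tendsto_of_nnnorm_hasDerivWithinAt_le (f := P ∘ ofComplex)
    (f' := φ ∘ ofComplex) hconv
    (fun z hz => by
      simpa [ofComplex_apply_of_im_pos hz.2] using (hP ⟨z, hz.2⟩).hasDerivWithinAt)
    (fun z hz => hball hz.1 _ (by simp [ofComplex_apply_of_im_pos hz.2])) hcauchy hmem
  exact ⟨L, by simpa [tendsto_map'_iff, Function.comp_def] using hL⟩

lemma exists_isPrimitiveFrom (hφ : MDiff φ) (hlim : Tendsto φ (nontangential p) (𝓝 c)) :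
    ∃ P, IsPrimitiveFrom p φ P := by
  obtain ⟨P, hP⟩ := exists_hasDerivAt_of_mdifferentiable hφ
  have hex {δ : ℝ} (hδ : 0 < δ) (hδ' : δ ≤ 1) :=
    exists_tendsto_nontangentialWithin hP hδ.le hδ' (tendsto_nontangential_iff.1 hlim δ hδ)
  obtain ⟨L, hL⟩ := hex one_pos le_rfl
  refine ⟨fun τ => P τ - L, fun τ => (hP τ).sub_const L,
    tendsto_nontangential_iff.2 fun δ hδ => ?_⟩
  -- Stolz angles are nested, so the limits inside all of them agree with the one for `δ = 1`.
  obtain ⟨L', hL'⟩ := hex (lt_min hδ one_pos) (min_le_right _ _)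
  have := neBot_nontangentialWithin (p := p) le_rfl
  have hLL' : L' = L :=
    tendsto_nhds_unique (hL'.mono_left (nontangentialWithin_antitone p (min_le_right _ _))) hL
  have hδL := hL'.mono_left (nontangentialWithin_antitone p (min_le_left δ 1))
  simpa [hLL'] using hδL.sub_const L

/-- The integral of `φ dτ` along the straight segment from the real point `p` to `τ`. The integrand
has a junk value at the endpoint `p` itself, which does not affect the integral. -/
noncomputable def segmentIntegral (p : ℝ) (φ : ℍ → ℂ) (τ : ℍ) : ℂ :=
  ∫ x in (0 : ℝ)..1, φ (ofComplex (p + x * (τ - p))) * (τ - p)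

lemma continuousAt_comp_segment {u : ℍ → ℂ} (hu : Continuous u) (p : ℝ) (τ : ℍ) {x : ℝ}
    (hx : 0 < x) : ContinuousAt (fun x : ℝ => u (ofComplex ((p : ℂ) + x * (τ - p)))) x := by
  have him : 0 < ((p : ℂ) + x * (τ - p)).im := by
    rw [im_segment]; exact mul_pos hx τ.im_pos
  have hof : ContinuousAt ofComplex ((p : ℂ) + x * (τ - p)) :=
    (mdifferentiableAt_ofComplex him).continuousAt
  have hseg : ContinuousAt (fun x : ℝ => (p : ℂ) + x * (τ - p)) x := by fun_prop
  exact hu.continuousAt.comp (hof.comp_of_eq hseg rfl)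

lemma tendsto_comp_segment {u : ℍ → ℂ} (hu : Tendsto u (nontangential p) (𝓝 c)) (τ : ℍ) :
    Tendsto (fun x : ℝ => u (ofComplex ((p : ℂ) + x * (τ - p)))) (𝓝[>] 0) (𝓝 c) := by
  obtain ⟨δ, hδ, hτ⟩ := exists_mem_stolzAngle p τ
  exact (tendsto_nontangential_iff.1 hu δ hδ).comp (tendsto_ofComplex_segment hτ)

lemma IsPrimitiveFrom.segmentIntegral_eq (hP : IsPrimitiveFrom p φ P) (hφ : Continuous φ)
    (hlim : Tendsto φ (nontangential p) (𝓝 c)) (τ : ℍ) : segmentIntegral p φ τ = P τ := by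
  set γ : ℝ → ℂ := fun x => (p : ℂ) + x * (τ - p) with hγ
  have hγ' (x : ℝ) : HasDerivAt γ (τ - p) x := by
    simpa [hγ] using ((hasDerivAt_id x).ofReal_comp.mul_const ((τ : ℂ) - p)).const_add (p : ℂ)
  have hderiv {x : ℝ} (hx : 0 < x) :
      HasDerivAt (fun x => P (ofComplex (γ x))) (φ (ofComplex (γ x)) * (τ - p)) x := by
    have h := hP.hasDerivAt (ofComplex (γ x))
    rw [coe_ofComplex_segment p τ hx] at h
    exact h.comp x (hγ' x)
  have hone : P (ofComplex (γ 1)) = P τ := by simp [hγ]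
  have hint : IntervalIntegrable (fun x => φ (ofComplex (γ x)) * (τ - p)) volume 0 1 :=
    intervalIntegrable_of_tendsto one_pos
      (fun x hx => ((continuousAt_comp_segment hφ p τ hx.1).mul_const _).continuousWithinAt)
      ((tendsto_comp_segment hlim τ).mul_const _)
      (((continuousAt_comp_segment hφ p τ one_pos).mul_const _).mono_left nhdsWithin_le_nhds)
  have hFTC := intervalIntegral.integral_eq_sub_of_hasDerivAt_of_tendsto one_pos
    (fun x hx => hderiv hx.1) hint (tendsto_comp_segment hP.tendsto_zero τ)
    ((hderiv one_pos).continuousAt.tendsto.mono_left nhdsWithin_le_nhds)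
  rw [segmentIntegral, hFTC, hone, sub_zero]

end Primitives

section MoebiusAction

variable {p q δ : ℝ} {γ : GL (Fin 2) ℝ} {φ P : ℍ → ℂ}

lemma denom_ne_zero_of_num_eq (hq : num γ p = q * denom γ p) : denom γ p ≠ 0 := by
  intro hzero
  have hnum : num γ p = 0 := by rw [hq, hzero, mul_zero]
  refine γ.det_ne_zero (Complex.ofReal_injective ?_)
  rw [Matrix.det_fin_two]
  push_cast
  simp only [num, denom] at hnum hzero
  linear_combination (γ 0 0 : ℂ) * hzero - (γ 1 0 : ℂ) * hnum

lemma coe_smul_sub (hγ : 0 < γ.det.val) (hq : num γ p = q * denom γ p) (τ : ℍ) :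
    ((γ • τ : ℍ) : ℂ) - q = γ.det.val * (τ - p) / (denom γ τ * denom γ p) := by
  have hdet : ((γ.det.val : ℝ) : ℂ) = γ 0 0 * γ 1 1 - γ 0 1 * γ 1 0 := by
    simp [Matrix.det_fin_two]
  have hp := denom_ne_zero_of_num_eq hq
  rw [coe_smul_of_det_pos hγ, eq_div_iff (mul_ne_zero (denom_ne_zero γ τ) hp), sub_mul,
    div_mul_eq_mul_div, mul_left_comm, mul_div_cancel_left₀ _ (denom_ne_zero γ τ), hdet,
    mul_left_comm, ← hq]
  simp only [num, denom]
  ring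

lemma smul_mem_stolzAngle (hγ : 0 < γ.det.val) (hq : num γ p = q * denom γ p) {τ : ℍ}
    (hτ : (τ : ℂ) ∈ stolzAngle p δ) :
    ((γ • τ : ℍ) : ℂ) ∈ stolzAngle q (δ * (‖denom γ p‖ / ‖denom γ τ‖)) := by
  have hp : ‖denom γ p‖ ≠ 0 := norm_ne_zero_iff.2 (denom_ne_zero_of_num_eq hq)
  have hd : ‖denom γ τ‖ ≠ 0 := norm_ne_zero_iff.2 (denom_ne_zero γ τ)
  have hnorm : ‖((γ.det.val : ℝ) : ℂ)‖ = γ.det.val := by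
    rw [Complex.norm_real, Real.norm_of_nonneg hγ.le]
  simp only [stolzAngle, mem_ofPred_eq, coe_smul_sub hγ hq, coe_im, im_smul_eq_div_normSq,
    Complex.normSq_eq_norm_sq, norm_div, norm_mul, hnorm, abs_of_pos hγ] at hτ ⊢
  calc δ * (‖denom γ p‖ / ‖denom γ τ‖) *
        (γ.det.val * ‖(τ : ℂ) - p‖ / (‖denom γ τ‖ * ‖denom γ p‖))
      = γ.det.val * (δ * ‖(τ : ℂ) - p‖) / ‖denom γ τ‖ ^ 2 := by field_simp
    _ ≤ γ.det.val * τ.im / ‖denom γ τ‖ ^ 2 := by gcongr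

lemma tendsto_smul_nontangential (hγ : 0 < γ.det.val) (hq : num γ p = q * denom γ p) :
    Tendsto (γ • · : ℍ → ℍ) (nontangential p) (nontangential q) := by
  have hp := denom_ne_zero_of_num_eq hq
  refine tendsto_nontangential_iff.2 fun δ hδ => ?_
  have hle := nontangentialWithin_le p hδ
  have hdenom : Tendsto (fun τ : ℍ => denom γ τ) (nontangentialWithin p δ) (𝓝 (denom γ p)) :=
    (tendsto_denom_nontangential γ).mono_left hle
  have hlim : Tendsto (fun τ : ℍ => ((γ • τ : ℍ) : ℂ)) (nontangentialWithin p δ) (𝓝 q) := by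
    have hnum : Tendsto (fun τ : ℍ => num γ τ) (nontangentialWithin p δ) (𝓝 (num γ p)) :=
      (tendsto_num_nontangential γ).mono_left hle
    rw [eq_div_of_mul_eq hp hq.symm]
    exact (hnum.div hdenom hp).congr fun τ => (coe_smul_of_det_pos hγ τ).symm
  have hratio : Tendsto (fun τ : ℍ => ‖denom γ p‖ / ‖denom γ τ‖) (nontangentialWithin p δ)
      (𝓝 1) :=
    div_self (norm_ne_zero_iff.2 hp) ▸
      (tendsto_const_nhds (x := ‖denom γ p‖)).div hdenom.norm (norm_ne_zero_iff.2 hp)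
  refine tendsto_nontangential_of_mem (half_pos hδ) hlim ?_
  filter_upwards [hratio.eventually_const_lt (by norm_num : (2⁻¹ : ℝ) < 1),
    eventually_mem_stolzAngle p δ] with τ hlt hτ
  refine stolzAngle_antitone q ?_ (smul_mem_stolzAngle hγ hq hτ)
  rw [div_eq_mul_inv]
  gcongr

lemma IsPrimitiveFrom.slash (hP : IsPrimitiveFrom q φ P) (hγ : 0 < γ.det.val)
    (hq : num γ p = q * denom γ p) :
    IsPrimitiveFrom p (φ ∣[(2 : ℤ)] γ) fun τ => P (γ • τ) where
  hasDerivAt τ := by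
    have hslash : (φ ∣[(2 : ℤ)] γ) τ = φ (γ • τ) * (γ.val.det / denom γ τ ^ 2) := by
      rw [slash_apply, σ, if_pos hγ, abs_of_pos hγ, ContinuousAlgEquiv.refl_apply, zpow_neg,
        div_eq_mul_inv, ← mul_assoc]
      norm_num
    have hcomp := HasDerivAt.comp_of_eq (τ : ℂ) (hP.hasDerivAt (γ • τ))
      (hasStrictDerivAt_smul hγ τ).hasDerivAt (by rw [ofComplex_apply])
    simpa only [Function.comp_def, ofComplex_apply, hslash] using hcomp
  tendsto_zero := hP.tendsto_zero.comp (tendsto_smul_nontangential hγ hq)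

end MoebiusAction

section CuspDecay

variable {p δ : ℝ} {γ : GL (Fin 2) ℝ} {k : ℤ}

lemma denom_eq_mul_sub (hp : denom γ p = 0) (z : ℂ) : denom γ z = γ 1 0 * (z - p) := by
  simp only [denom] at hp ⊢
  linear_combination hp

lemma norm_denom_inv_le (hδ : 0 < δ) (hp : denom γ p = 0) {τ : ℍ}
    (hτ : (τ : ℂ) ∈ stolzAngle p δ) :
    ‖denom γ τ‖⁻¹ ≤ |γ 1 0| / (δ * |γ.det.val|) * (γ • τ).im := by
  have hd : 0 < ‖denom γ τ‖ := norm_pos_iff.2 (denom_ne_zero γ τ)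
  have hdet : 0 < |γ.det.val| := abs_pos.2 γ.det.ne_zero
  have hbound : ‖denom γ τ‖ ≤ |γ 1 0| / δ * τ.im := by
    rw [denom_eq_mul_sub hp, norm_mul, Complex.norm_real, Real.norm_eq_abs, div_mul_eq_mul_div,
      le_div_iff₀ hδ, mul_assoc, mul_comm _ δ]
    gcongr
    exact hτ
  rw [im_smul_eq_div_normSq, Complex.normSq_eq_norm_sq]
  calc ‖denom γ τ‖⁻¹ = ‖denom γ τ‖ / ‖denom γ τ‖ ^ 2 := by field_simp
    _ ≤ |γ 1 0| / δ * τ.im / ‖denom γ τ‖ ^ 2 := by gcongr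
    _ = _ := by field_simp

lemma tendsto_smul_atImInfty (hp : denom γ p = 0) :
    Tendsto (γ • · : ℍ → ℍ) (nontangential p) atImInfty := by
  refine tendsto_nontangential_iff.2 fun δ hδ => tendsto_comap_iff.2 ?_
  have hc : γ 1 0 ≠ 0 := fun hc => denom_ne_zero γ I (by simp [denom_eq_mul_sub hp, hc])
  have hK : 0 < |γ 1 0| / (δ * |γ.det.val|) :=
    div_pos (abs_pos.2 hc) (mul_pos hδ (abs_pos.2 γ.det.ne_zero))
  have hdenom : Tendsto (fun τ : ℍ => ‖denom γ τ‖) (nontangentialWithin p δ) (𝓝[>] 0) := by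
    refine tendsto_nhdsWithin_iff.2 ⟨?_, .of_forall fun τ => norm_pos_iff.2 (denom_ne_zero γ τ)⟩
    simpa [hp] using ((tendsto_denom_nontangential γ).mono_left (nontangentialWithin_le p hδ)).norm
  have hle : ∀ᶠ τ : ℍ in nontangentialWithin p δ,
      ‖denom γ τ‖⁻¹ ≤ |γ 1 0| / (δ * |γ.det.val|) * (γ • τ).im :=
    (eventually_mem_stolzAngle p δ).mono fun τ hτ => norm_denom_inv_le hδ hp hτ
  exact (tendsto_const_mul_atTop_of_pos hK).1
    (tendsto_atTop_mono' _ hle hdenom.inv_tendsto_nhdsGT_zero)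

lemma tendsto_slash_nontangential {h : ℍ → ℂ} (hk : 0 ≤ k)
    (hh : Tendsto (fun w => ‖h w‖ * w.im ^ k) atImInfty (𝓝 0)) (hp : denom γ p = 0) :
    Tendsto (h ∣[k] γ) (nontangential p) (𝓝 0) := by
  refine tendsto_nontangential_iff.2 fun δ hδ => ?_
  set K : ℝ := |γ 1 0| / (δ * |γ.det.val|)
  have hlim : Tendsto (fun τ : ℍ => ‖h (γ • τ)‖ * (γ • τ).im ^ k) (nontangentialWithin p δ)
      (𝓝 0) :=
    hh.comp ((tendsto_smul_atImInfty hp).mono_left (nontangentialWithin_le p hδ))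
  refine squeeze_zero_norm' ?_ (mul_zero (|γ.det.val| ^ (k - 1) * K ^ k) ▸ hlim.const_mul _)
  filter_upwards [eventually_mem_stolzAngle p δ] with τ hτ
  have hinv : ‖denom γ τ‖ ^ (-k) ≤ (K * (γ • τ).im) ^ k := by
    rw [zpow_neg, ← inv_zpow]
    exact zpow_le_zpow_left₀ hk (by positivity) (norm_denom_inv_le hδ hp hτ)
  rw [slash_apply, norm_mul, norm_mul, norm_σ, norm_zpow, norm_zpow, Complex.norm_real,
    Real.norm_eq_abs, abs_abs]
  calc ‖h (γ • τ)‖ * |γ.det.val| ^ (k - 1) * ‖denom γ τ‖ ^ (-k)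
      ≤ ‖h (γ • τ)‖ * |γ.det.val| ^ (k - 1) * (K * (γ • τ).im) ^ k := by gcongr
    _ = |γ.det.val| ^ (k - 1) * K ^ k * (‖h (γ • τ)‖ * (γ • τ).im ^ k) := by
      rw [mul_zpow]; ring

variable {Γ : Subgroup (GL (Fin 2) ℝ)} [Γ.IsArithmetic]

lemma tendsto_norm_slash_mul_im_zpow (g : CuspForm Γ k) (γ : SL(2, ℤ)) (n : ℤ) :
    Tendsto (fun w : ℍ => ‖(⇑g ∣[k] γ) w‖ * w.im ^ n) atImInfty (𝓝 0) := by
  have : ((ConjAct.toConjAct (γ : GL (Fin 2) ℝ)⁻¹) • Γ).IsArithmetic := by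
    simpa [(show Rat.castHom ℝ = algebraMap ℚ ℝ by rfl), map_inv,
      Matrix.SpecialLinearGroup.map_mapGL]
      using! Subgroup.IsArithmetic.conj _ (Matrix.SpecialLinearGroup.mapGL ℚ γ)⁻¹
  obtain ⟨c, hc, hdecay⟩ :=
    CuspFormClass.exp_decay_atImInfty' (CuspForm.translate g (γ : GL (Fin 2) ℝ))
  have hexp : (fun w : ℍ => Real.exp (-c * w.im)) =o[atImInfty] fun w => w.im ^ (-n) := by
    have hreal := isLittleO_exp_neg_mul_rpow_atTop hc ((-n : ℤ) : ℝ)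
    simp only [Real.rpow_intCast] at hreal
    exact hreal.comp_tendsto tendsto_comap
  have hlim := ((hdecay.trans_isLittleO hexp).norm_left).tendsto_div_nhds_zero
  refine hlim.congr fun w => ?_
  rw [zpow_neg, div_inv_eq_mul]
  rfl

lemma tendsto_cuspForm_slash_nontangential (g : CuspForm Γ k) (hk : 0 ≤ k) (γ : SL(2, ℤ))
    {ν : SL(2, ℤ)} (hν : denom ν p = 0) : Tendsto (⇑g ∣[k] γ) (nontangential p) (𝓝 0) := by
  -- Since `ν` sends `p` to `∞`, decay at `p` is decay of the slash by `γ * ν⁻¹` at `∞`.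
  have hγ : γ = γ * ν⁻¹ * ν := (inv_mul_cancel_right γ ν).symm
  rw [hγ, SlashAction.slash_mul]
  exact tendsto_slash_nontangential hk (tendsto_norm_slash_mul_im_zpow g _ k) hν

end CuspDecay

section Sigma

lemma num_coe_apply (γ : SL(2, ℤ)) (z : ℂ) : num γ z = (γ 0 0 : ℂ) * z + (γ 0 1 : ℂ) := by
  simp [num]

lemma denom_coe_apply (γ : SL(2, ℤ)) (z : ℂ) : denom γ z = (γ 1 0 : ℂ) * z + (γ 1 1 : ℂ) := by
  simp [denom]

lemma fia_apply (f : ℍ → ℂ) (γ : SL(2, ℤ)) (i : ℕ) (τ : ℍ) :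
    fia f γ i τ = (f ∣[(4 : ℤ)] γ) τ * (τ : ℂ) ^ i := by
  rw [fia, SL_slash_apply, ModularGroup.denom_apply]

lemma denom_sig (z : ℂ) : denom sig z = z + 2 := by
  rw [denom_coe_apply]
  simp [sig]

lemma num_sig_neg_one : num sig ((-1 : ℝ) : ℂ) = ((-1 : ℝ) : ℂ) * denom sig ((-1 : ℝ) : ℂ) := by
  have hsum : (-1 : ℂ) + 2 = 1 := by norm_num
  rw [num_coe_apply, denom_sig]
  simp [sig, hsum]

lemma coe_add_two_ne_zero (τ : ℍ) : (τ : ℂ) + 2 ≠ 0 :=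
  denom_sig τ ▸ denom_ne_zero sig τ

lemma coe_sig_smul (τ : ℍ) : ((sig • τ : ℍ) : ℂ) = -1 / ((τ : ℂ) + 2) := by
  rw [coe_specialLinearGroup_apply]
  simp [sig]

lemma coe_sig_smul_mul (τ : ℍ) : ((sig • τ : ℍ) : ℂ) * τ = -1 - 2 * (sig • τ : ℍ) := by
  have hne := coe_add_two_ne_zero τ
  rw [coe_sig_smul]
  field_simp
  ring

lemma fia_mul_sig_apply (f : ℍ → ℂ) (lam : SL(2, ℤ)) (i : ℕ) (τ : ℍ) :
    fia f (lam * sig) i τ = fia f lam 2 (sig • τ) * (τ : ℂ) ^ i * ((τ : ℂ) + 2) ^ (-2 : ℤ) := by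
  rw [fia_apply, fia_apply, SlashAction.slash_mul, SL_slash_apply (γ := sig), denom_sig,
    coe_sig_smul]
  have hne := coe_add_two_ne_zero τ
  field_simp

lemma fia_mul_sig_zero (f : ℍ → ℂ) (lam : SL(2, ℤ)) :
    fia f (lam * sig) 0 = fia f lam 2 ∣[(2 : ℤ)] sig := by
  ext τ
  rw [fia_mul_sig_apply, SL_slash_apply, denom_sig, pow_zero, mul_one]

lemma fia_mul_sig_one (f : ℍ → ℂ) (lam : SL(2, ℤ)) :
    fia f (lam * sig) 1 = ((-1 : ℂ) • fia f lam 1 + (-2 : ℂ) • fia f lam 2) ∣[(2 : ℤ)] sig := by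
  ext τ
  rw [fia_mul_sig_apply, SL_slash_apply, denom_sig]
  simp only [Pi.add_apply, Pi.smul_apply, smul_eq_mul, fia_apply]
  linear_combination ((f ∣[(4 : ℤ)] lam) (sig • τ) * (sig • τ : ℍ) *
    ((τ : ℂ) + 2) ^ (-2 : ℤ)) * coe_sig_smul_mul τ

lemma fia_mul_sig_two (f : ℍ → ℂ) (lam : SL(2, ℤ)) :
    fia f (lam * sig) 2 =
      (fia f lam 0 + (4 : ℂ) • fia f lam 1 + (4 : ℂ) • fia f lam 2) ∣[(2 : ℤ)] sig := by
  ext τ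
  rw [fia_mul_sig_apply, SL_slash_apply, denom_sig]
  simp only [Pi.add_apply, Pi.smul_apply, smul_eq_mul, fia_apply]
  linear_combination ((f ∣[(4 : ℤ)] lam) (sig • τ) * ((sig • τ : ℍ) * τ - 1 - 2 * (sig • τ : ℍ)) *
    ((τ : ℂ) + 2) ^ (-2 : ℤ)) * coe_sig_smul_mul τ

end Sigma

section PeriodIntegrals

lemma extH_coe (f : ℍ → ℂ) (τ : ℍ) : extH f τ = f τ := dif_pos τ.im_pos

lemma mob_coe (γ : SL(2, ℤ)) (τ : ℍ) : mob γ τ = (γ • τ : ℍ) := by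
  rw [coe_specialLinearGroup_apply]
  rfl

lemma pathPt_eq (τ : ℍ) (x : ℝ) : pathPt τ x = ((-1 : ℝ) : ℂ) + x * (τ - ((-1 : ℝ) : ℂ)) := by
  simp [pathPt]

lemma G_eq_conj_segmentIntegral (g : ℍ → ℂ) (γ : SL(2, ℤ)) (i : ℕ) (τ : ℍ) :
    G g γ i τ = starRingEnd ℂ (segmentIntegral (-1) (fia g γ i) τ) := by
  rw [G, segmentIntegral]
  congr 1
  refine intervalIntegral.integral_congr_Ioo_of_le zero_le_one fun x hx => ?_
  rw [pathPt_eq, ← coe_ofComplex_segment (-1) τ hx.1, mob_coe, extH_coe, fia]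
  simp

variable {Γ : Subgroup (GL (Fin 2) ℝ)}

lemma mdifferentiable_fia (g : CuspForm Γ 4) (γ : SL(2, ℤ)) (i : ℕ) : MDiff (fia g γ i) := by
  have hslash : MDiff (⇑g ∣[(4 : ℤ)] γ) := (CuspFormClass.holo g).slash 4 (γ : GL (Fin 2) ℝ)
  have hfia : fia g γ i = (⇑g ∣[(4 : ℤ)] γ) * (UpperHalfPlane.coe) ^ i := funext (fia_apply g γ i)
  rw [hfia]
  exact hslash.mul (mdifferentiable_coe.pow i)

variable [Γ.IsArithmetic]

lemma tendsto_fia_nontangential (g : CuspForm Γ 4) (γ : SL(2, ℤ)) (i : ℕ) :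
    Tendsto (fia g γ i) (nontangential (-1)) (𝓝 0) := by
  -- `S * T = (0 -1; 1 1)` sends the cusp `-1` to `∞`.
  have hcusp : denom (ModularGroup.S * ModularGroup.T : SL(2, ℤ)) ((-1 : ℝ) : ℂ) = 0 := by
    rw [denom_coe_apply]
    simp [ModularGroup.coe_S, ModularGroup.coe_T]
  have hslash := tendsto_cuspForm_slash_nontangential g (by norm_num) γ hcusp
  have hmul := hslash.mul ((tendsto_coe_nontangential (-1)).pow i)
  rw [zero_mul] at hmul
  exact hmul.congr fun τ => (fia_apply g γ i τ).symm

lemma exists_isPrimitiveFrom_fia (g : CuspForm Γ 4) (γ : SL(2, ℤ)) (i : ℕ) :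
    ∃ P, IsPrimitiveFrom (-1) (fia g γ i) P :=
  exists_isPrimitiveFrom (mdifferentiable_fia g γ i) (tendsto_fia_nontangential g γ i)

lemma IsPrimitiveFrom.G_eq {g : CuspForm Γ 4} {γ : SL(2, ℤ)} {P : ℍ → ℂ}
    (hP : IsPrimitiveFrom (-1) (fia g γ i) P) (τ : ℍ) : G g γ i τ = starRingEnd ℂ (P τ) := by
  rw [G_eq_conj_segmentIntegral, hP.segmentIntegral_eq (mdifferentiable_fia g γ i).continuous
    (tendsto_fia_nontangential g γ i)]

lemma IsPrimitiveFrom.slash_sig {φ P : ℍ → ℂ} (hP : IsPrimitiveFrom (-1) φ P) :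
    IsPrimitiveFrom (-1) (φ ∣[(2 : ℤ)] sig) fun τ => P (sig • τ) :=
  hP.slash (by simp) num_sig_neg_one

lemma G_mul_sig_zero (g : CuspForm Γ 4) (lam : SL(2, ℤ)) (τ : ℍ) :
    G g (lam * sig) 0 τ = G g lam 2 (sig • τ) := by
  obtain ⟨P, hP⟩ := exists_isPrimitiveFrom_fia g lam 2
  have hPσ := hP.slash_sig
  rw [← fia_mul_sig_zero] at hPσ
  rw [hPσ.G_eq, hP.G_eq]

lemma G_mul_sig_one (g : CuspForm Γ 4) (lam : SL(2, ℤ)) (τ : ℍ) :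
    G g (lam * sig) 1 τ = -G g lam 1 (sig • τ) - 2 * G g lam 2 (sig • τ) := by
  obtain ⟨P₁, hP₁⟩ := exists_isPrimitiveFrom_fia g lam 1
  obtain ⟨P₂, hP₂⟩ := exists_isPrimitiveFrom_fia g lam 2
  have hP := ((hP₁.const_smul (-1)).add (hP₂.const_smul (-2))).slash_sig
  rw [← fia_mul_sig_one] at hP
  rw [hP.G_eq, hP₁.G_eq, hP₂.G_eq]
  simp only [Pi.add_apply, Pi.smul_apply, smul_eq_mul, map_add, map_mul, map_neg, map_one,
    Complex.conj_ofNat]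
  ring

lemma G_mul_sig_two (g : CuspForm Γ 4) (lam : SL(2, ℤ)) (τ : ℍ) :
    G g (lam * sig) 2 τ =
      G g lam 0 (sig • τ) + 4 * G g lam 1 (sig • τ) + 4 * G g lam 2 (sig • τ) := by
  obtain ⟨P₀, hP₀⟩ := exists_isPrimitiveFrom_fia g lam 0
  obtain ⟨P₁, hP₁⟩ := exists_isPrimitiveFrom_fia g lam 1
  obtain ⟨P₂, hP₂⟩ := exists_isPrimitiveFrom_fia g lam 2
  have hP := ((hP₀.add (hP₁.const_smul 4)).add (hP₂.const_smul 4)).slash_sig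
  rw [← fia_mul_sig_two] at hP
  rw [hP.G_eq, hP₀.G_eq, hP₁.G_eq, hP₂.G_eq]
  simp only [Pi.add_apply, Pi.smul_apply, smul_eq_mul, map_add, map_mul, Complex.conj_ofNat]

end PeriodIntegrals

end MW

open MW in
theorem stmt18_general {Γ : Subgroup (GL (Fin 2) ℝ)} [Γ.IsArithmetic] (f : ℍ → ℂ)
    (g : CuspForm Γ 4) (lam : SL(2, ℤ)) (τ : ℍ) :
    (G (⇑g) (lam * sig) 0 τ = G (⇑g) lam 2 (sig • τ) ∧
      G (⇑g) (lam * sig) 1 τ = -G (⇑g) lam 1 (sig • τ) - 2 * G (⇑g) lam 2 (sig • τ) ∧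
      G (⇑g) (lam * sig) 2 τ =
        G (⇑g) lam 0 (sig • τ) + 4 * G (⇑g) lam 1 (sig • τ) + 4 * G (⇑g) lam 2 (sig • τ)) ∧
    G (⇑g) (lam * sig) 0 τ * fia f (lam * sig) 2 τ -
        2 * G (⇑g) (lam * sig) 1 τ * fia f (lam * sig) 1 τ +
        G (⇑g) (lam * sig) 2 τ * fia f (lam * sig) 0 τ =
      (G (⇑g) lam 0 (sig • τ) * fia f lam 2 (sig • τ) -
          2 * G (⇑g) lam 1 (sig • τ) * fia f lam 1 (sig • τ) +
          G (⇑g) lam 2 (sig • τ) * fia f lam 0 (sig • τ)) * ((τ : ℂ) + 2) ^ (-2 : ℤ) := by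
  refine ⟨⟨G_mul_sig_zero g lam τ, G_mul_sig_one g lam τ, G_mul_sig_two g lam τ⟩, ?_⟩
  rw [G_mul_sig_zero, G_mul_sig_one, G_mul_sig_two, fia_mul_sig_zero, fia_mul_sig_one,
    fia_mul_sig_two]
  simp only [ModularForm.SL_slash_apply, denom_sig, Pi.add_apply, Pi.smul_apply, smul_eq_mul]
  ring

open MW in
theorem stmt18 (l : ℕ) (hl : 3 ≤ l)
    (f g : CuspForm (CongruenceSubgroup.Gamma1 l) 4)
    (lam : SL(2, ℤ)) (τ : ℍ) :
    (G (⇑g) (lam * sig) 0 τ = G (⇑g) lam 2 (sig • τ) ∧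
      G (⇑g) (lam * sig) 1 τ = -G (⇑g) lam 1 (sig • τ) - 2 * G (⇑g) lam 2 (sig • τ) ∧
      G (⇑g) (lam * sig) 2 τ =
        G (⇑g) lam 0 (sig • τ) + 4 * G (⇑g) lam 1 (sig • τ) + 4 * G (⇑g) lam 2 (sig • τ)) ∧
    G (⇑g) (lam * sig) 0 τ * fia (⇑f) (lam * sig) 2 τ -
        2 * G (⇑g) (lam * sig) 1 τ * fia (⇑f) (lam * sig) 1 τ +
        G (⇑g) (lam * sig) 2 τ * fia (⇑f) (lam * sig) 0 τ =
      (G (⇑g) lam 0 (sig • τ) * fia (⇑f) lam 2 (sig • τ) -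
          2 * G (⇑g) lam 1 (sig • τ) * fia (⇑f) lam 1 (sig • τ) +
          G (⇑g) lam 2 (sig • τ) * fia (⇑f) lam 0 (sig • τ)) * ((τ : ℂ) + 2) ^ (-2 : ℤ) := by
  have : NeZero l := ⟨by omega⟩
  exact stmt18_general f g lam τ
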